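/- Let k and m be positive integers with m ≤ k and m even. If A is an intersecting collection of k-multisets on {1,…,m}, then |A| ≤ |M_{(>m/2)}| + (1/2)·|M_{(m/2)}|, where M_{(>m/2)} is the collection of all k-multisets on {1,…,m} with more than m/2 distinct elements and M_{(m/2)} is the collection of all k-multisets on {1,…,m} with exactly m/2 distinct elements. -/

import Mathlib

/-!
If `𝒜` is an intersecting family of sets, no member of `𝒜` has its complement in `𝒜`. Hence a
nonnegative function on sets that gives `S` and `Sᶜ` together at least `2 * w S`, for every `S`,
has total at least twice the `w`-weight of `𝒜`.

Let `w S` be the number of `k`-multisets with support `S`. Removing one copy of each element of `S`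
gives `w S = (k - 1).choose (k - #S)`. If the ground set has at most `k` elements, then
`(k - #S) + (k - #Sᶜ) ≥ k`, so unimodality of the binomial coefficients yields `w S ≤ w Sᶜ`
whenever `#S ≤ #Sᶜ`. The function equal to `2 * w` above the middle layer, to `w` on it and to `0`
below it therefore has the property above, and its total is the claimed bound.
-/

open Finset

section IntersectingFamilies

variable {α M : Type*} [Fintype α] [AddCommMonoid M] [PartialOrder M] [IsOrderedAddMonoid M]

theorem sum_add_compl_le_sum_of_intersecting [BooleanAlgebra α] {𝒜 : Finset α}
    (h𝒜 : (𝒜 : Set α).Intersecting) {f : α → M} (hf : ∀ a, 0 ≤ f a) :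
    ∑ a ∈ 𝒜, (f a + f aᶜ) ≤ ∑ a, f a := by
  calc ∑ a ∈ 𝒜, (f a + f aᶜ)
      = ∑ a ∈ 𝒜.disjUnion _ h𝒜.disjoint_map_compl, f a := by
        rw [sum_add_distrib, sum_disjUnion, sum_map]; rfl
    _ ≤ ∑ a, f a := sum_le_univ_sum_of_nonneg hf

theorem two_nsmul_sum_le_of_intersecting [DecidableEq α] {𝒜 : Finset (Finset α)}
    (h𝒜 : (𝒜 : Set (Finset α)).Intersecting) {w : Finset α → M} (hw₀ : ∀ S, 0 ≤ w S)
    (hw : ∀ S, #S ≤ #Sᶜ → w S ≤ w Sᶜ) :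
    2 • ∑ S ∈ 𝒜, w S ≤
      2 • ∑ S with Fintype.card α < 2 * #S, w S + ∑ S with 2 * #S = Fintype.card α, w S := by
  let f : Finset α → M := fun S ↦
    (if Fintype.card α < 2 * #S then 2 • w S else 0) + if 2 * #S = Fintype.card α then w S else 0
  have hf₀ (S : Finset α) : 0 ≤ f S := by
    dsimp only [f]
    split_ifs <;> simp [hw₀ S, nsmul_nonneg, add_nonneg]
  have two_nsmul_le (S : Finset α) : 2 • w S ≤ f S + f Sᶜ := by
    have hcard := card_add_card_compl S
    rcases lt_trichotomy (2 * #S) (Fintype.card α) with hlt | heq | hgt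
    · have hf : f Sᶜ = 2 • w Sᶜ := by
        simp [f, show Fintype.card α < 2 * #Sᶜ by omega, show 2 * #Sᶜ ≠ Fintype.card α by omega]
      calc 2 • w S ≤ 2 • w Sᶜ := nsmul_le_nsmul_right (hw S (by omega)) 2
        _ ≤ f S + f Sᶜ := hf ▸ le_add_of_nonneg_left (hf₀ S)
    · have hf : f S = w S := by simp [f, heq]
      have hf' : f Sᶜ = w Sᶜ := by simp [f, show 2 * #Sᶜ = Fintype.card α by omega]
      rw [two_nsmul, hf, hf']
      gcongr
      exact hw S (by omega)
    · have hf : f S = 2 • w S := by simp [f, hgt, hgt.ne']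
      exact hf ▸ le_add_of_nonneg_right (hf₀ Sᶜ)
  calc 2 • ∑ S ∈ 𝒜, w S = ∑ S ∈ 𝒜, 2 • w S := smul_sum
    _ ≤ ∑ S ∈ 𝒜, (f S + f Sᶜ) := sum_le_sum fun S _ ↦ two_nsmul_le S
    _ ≤ ∑ S, f S := sum_add_compl_le_sum_of_intersecting h𝒜 hf₀
    _ = _ := by simp only [f, sum_add_distrib, ← sum_filter, smul_sum]

end IntersectingFamilies

theorem monotoneOn_choose_Iic_half (n : ℕ) : MonotoneOn n.choose (Set.Iic (n / 2)) :=
  monotoneOn_of_le_succ Set.ordConnected_Iic fun _ _ _ h ↦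
    Nat.choose_le_succ_of_lt_half_left (Nat.succ_le_iff.1 h)

theorem choose_le_choose_of_le_of_le_add {n a b : ℕ} (hab : a ≤ b) (hn : n ≤ a + b) :
    n.choose b ≤ n.choose a := by
  rcases lt_or_ge n b with hb | hb
  · simp [Nat.choose_eq_zero_of_lt hb]
  rcases le_or_gt a (n / 2) with ha | ha
  · rw [← Nat.choose_symm hb]
    exact monotoneOn_choose_Iic_half n (by grind) ha (by omega)
  · rw [← Nat.choose_symm hb, ← Nat.choose_symm (hab.trans hb)]
    exact monotoneOn_choose_Iic_half n (by grind) (by grind) (by omega)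

section Support

variable {α : Type*} [DecidableEq α]

theorem card_finset_sym (S : Finset α) (n : ℕ) : #(S.sym n) = (#S).multichoose n := by
  conv_lhs => rw [← S.attach_map_val]
  rw [sym_map, card_map, attach_eq_univ, sym_univ, card_univ, Sym.card_sym_eq_multichoose,
    Fintype.card_coe]

/-- The `k`-multisets whose support is exactly `S`. They are cut out of `S.sym k` so that the
ambient type need not be finite. -/
def symWithSupport (S : Finset α) (k : ℕ) : Finset (Sym α k) :=
  {s ∈ S.sym k | (s : Multiset α).toFinset = S}

theorem mem_symWithSupport {S : Finset α} {k : ℕ} {s : Sym α k} :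
    s ∈ symWithSupport S k ↔ (s : Multiset α).toFinset = S := by
  simp only [symWithSupport, mem_filter, mem_sym_iff, and_iff_right_iff_imp]
  rintro rfl x hx
  exact Multiset.mem_toFinset.2 hx

theorem card_symWithSupport_eq_multichoose {S : Finset α} {k : ℕ} (hS : #S ≤ k) :
    #(symWithSupport S k) = (#S).multichoose (k - #S) := by
  let addSupport (t : Sym α (k - #S)) : Sym α k := ⟨S.val + t, by simp [hS]⟩
  rw [← card_finset_sym, eq_comm]
  refine card_nbij addSupport (fun t ht ↦ ?_) (fun t _ t' _ h ↦ ?_) (fun s hs ↦ ?_)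
  · have toFinset_subset : (t : Multiset α).toFinset ⊆ S := fun x hx ↦
      mem_sym_iff.1 ht x (Multiset.mem_toFinset.1 hx)
    refine mem_symWithSupport.2 ?_
    calc (S.val + t : Multiset α).toFinset = S ∪ (t : Multiset α).toFinset := by
          rw [Multiset.toFinset_add, val_toFinset]
      _ = S := union_eq_left.2 toFinset_subset
  · exact Sym.coe_injective (add_left_cancel (congrArg Subtype.val h))
  · have toFinset_eq := mem_symWithSupport.1 hs
    have val_le : S.val ≤ s := toFinset_eq ▸ Multiset.dedup_le _
    refine ⟨⟨s - S.val, by simp [Multiset.card_sub val_le]⟩, ?_, ?_⟩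
    · exact mem_sym_iff.2 fun x hx ↦
        toFinset_eq ▸ Multiset.mem_toFinset.2 (Multiset.mem_of_le tsub_le_self hx)
    · exact Sym.coe_injective (add_tsub_cancel_of_le val_le)

theorem card_symWithSupport {S : Finset α} {k : ℕ} (hS : #S ≤ k) :
    #(symWithSupport S k) = (k - 1).choose (k - #S) := by
  rw [card_symWithSupport_eq_multichoose hS, Nat.multichoose_eq, Nat.add_sub_of_le hS]

theorem card_symWithSupport_le_of_card_le {S T : Finset α} {k : ℕ} (hST : #S ≤ #T)
    (hk : #S + #T ≤ k) : #(symWithSupport S k) ≤ #(symWithSupport T k) := by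
  rw [card_symWithSupport (by omega), card_symWithSupport (by omega)]
  exact choose_le_choose_of_le_of_le_add (by omega) (by omega)

theorem sum_card_symWithSupport [Fintype α] (𝒮 : Finset (Finset α)) (k : ℕ) :
    ∑ S ∈ 𝒮, #(symWithSupport S k) = #{s : Sym α k | (s : Multiset α).toFinset ∈ 𝒮} := by
  rw [← sum_card_fiberwise_eq_card_filter]
  congr! with S
  ext s
  simp [mem_symWithSupport]

theorem intersecting_image_toFinset {k : ℕ} {A : Finset (Sym α k)}
    (hA : ∀ s ∈ A, ∀ t ∈ A, ∃ x, x ∈ s ∧ x ∈ t) :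
    (A.image fun s : Sym α k ↦ (s : Multiset α).toFinset : Set (Finset α)).Intersecting := by
  rw [coe_image]
  rintro _ ⟨s, hs, rfl⟩ _ ⟨t, ht, rfl⟩
  obtain ⟨x, hxs, hxt⟩ := hA s hs t ht
  exact not_disjoint_iff.2 ⟨x, Multiset.mem_toFinset.2 hxs, Multiset.mem_toFinset.2 hxt⟩

end Support

theorem stmt_5_general {α : Type*} [Fintype α] [DecidableEq α] {k : ℕ} (hk : Fintype.card α ≤ k)
    (A : Finset (Sym α k)) (hA : ∀ s ∈ A, ∀ t ∈ A, ∃ x, x ∈ s ∧ x ∈ t) :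
    2 * #A ≤
      2 * #{s : Sym α k | Fintype.card α < 2 * #(s : Multiset α).toFinset} +
        #{s : Sym α k | 2 * #(s : Multiset α).toFinset = Fintype.card α} := by
  let 𝒜 := A.image fun s : Sym α k ↦ (s : Multiset α).toFinset
  have card_le : #A ≤ ∑ S ∈ 𝒜, #(symWithSupport S k) := by
    rw [sum_card_symWithSupport]
    exact card_le_card fun s hs ↦ (mem_filter_univ s).2 (mem_image_of_mem _ hs)
  have card_le_compl (S : Finset α) (hS : #S ≤ #Sᶜ) :
      #(symWithSupport S k) ≤ #(symWithSupport Sᶜ k) :=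
    card_symWithSupport_le_of_card_le hS ((card_add_card_compl S).trans_le hk)
  calc 2 * #A ≤ 2 * ∑ S ∈ 𝒜, #(symWithSupport S k) := by gcongr
    _ ≤ _ := two_nsmul_sum_le_of_intersecting (intersecting_image_toFinset hA)
      (fun _ ↦ Nat.zero_le _) card_le_compl
    _ = _ := by simp only [sum_card_symWithSupport, mem_filter_univ, smul_eq_mul]

/-- For `m ≤ k` with `m` even, an intersecting collection `A` of `k`-multisets on `{1,…,m}`
satisfies `|A| ≤ |M_{(>m/2)}| + (1/2)·|M_{(m/2)}|` (stated multiplied through by 2),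
where `M_{(>m/2)}` (resp. `M_{(m/2)}`) is the collection of `k`-multisets whose support
has more than (resp. exactly) `m/2` elements. -/
theorem stmt_5 (k m : ℕ) (hk : 0 < k) (hm : 0 < m) (hmk : m ≤ k) (heven : Even m)
    (A : Finset (Sym (Fin m) k))
    (hint : ∀ s ∈ A, ∀ t ∈ A, ∃ x : Fin m, x ∈ s ∧ x ∈ t) :
    2 * A.card ≤
      2 * (Finset.univ.filter
        (fun s : Sym (Fin m) k => m < 2 * (s : Multiset (Fin m)).toFinset.card)).card +
      (Finset.univ.filter
        (fun s : Sym (Fin m) k => 2 * (s : Multiset (Fin m)).toFinset.card = m)).card := by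
  simpa only [Fintype.card_fin] using stmt_5_general (by simpa) A hint
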